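/- Suppose that for every n ≥ 2 the n-tuple (x₁ⁿ,…,xₙⁿ) ∈ (ℝ²)ⁿ minimizes w_n over (ℝ²)ⁿ. Then lim_{n→∞} (1/n)∑_{i=1}^n log(1+|xᵢⁿ|²) = ∫_{ℝ²} log(1+|x|²) dμ_V(x) = 1. -/

import Mathlib

open Real Classical Filter MeasureTheory

/-- The Hamiltonian `w_n` (for `V(x) = log(1+|x|²)`), with value `+∞` at tuples with
coinciding points. -/
noncomputable def wHamE (n : ℕ) (x : Fin n → EuclideanSpace ℝ (Fin 2)) : EReal :=
  if Function.Injective x then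
    ((-∑ i : Fin n, ∑ j : Fin n, (if i ≠ j then Real.log (dist (x i) (x j)) else 0)
      + (n : ℝ) * ∑ i : Fin n, Real.log (1 + ‖x i‖^2) : ℝ) : EReal)
  else ⊤

/-- The equilibrium measure `μ_V`, with density `1/(π(1+|x|²)²)` w.r.t. Lebesgue measure. -/
noncomputable def muV : Measure (EuclideanSpace ℝ (Fin 2)) :=
  volume.withDensity fun x => ENNReal.ofReal (1 / (π * (1 + ‖x‖^2)^2))

/-!
Stereographic projection carries `μ_V` to the uniform measure of the sphere, and the kernel
`log (1 + |z|²) + log (1 + |w|²) - 2 log |z - w|` to `-2 log` of the chordal distance, which is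
invariant under rotations of the sphere and has constant potential `1`. For a minimizer `x` of `n`
points let `S = ∑ log (1 + |xᵢ|²)`, the energy of interaction with the pole. Rotating a point `z`
to the pole moves `x` to another configuration, and averaging the minimality inequality over `z`
gives `S ≤ n`. Replacing a single point by `z` and averaging over `z` gives `2 w_n(x) ≤ n² + S`.

Conversely, multiply the columns of the Vandermonde matrix of `x` by `√C(M, k)` with `M = n + p`.
The `i`-th row then has squared norm at most `(1 + |xᵢ|²) ^ M`, and Hadamard's inequality yields
`w_n(x) ≥ ∑_{k < n} log C(M, k) - p S`. As the binomial sum is at least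
`n² / 2 + n p - O((p² + n) log n)`, the two bounds on `w_n(x)` give
`(2 p + 1) S ≥ 2 n p - O(n log n)` for `p ~ √n`, hence `S / n → 1`.
-/

section SphericalMeasure

open Module Set
open scoped Topology

variable {E : Type*} [NormedAddCommGroup E] [InnerProductSpace ℝ E] [FiniteDimensional ℝ E]
  [MeasurableSpace E] [BorelSpace E]

/-- The density `1/(π(1+|x|²)²)`. When `dim E = 2` this is the uniform probability measure of the
sphere in stereographic coordinates, and `μ_V` is its instance `E = EuclideanSpace ℝ (Fin 2)`; the
computations are done for `E = ℂ`. -/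
noncomputable def sphericalMeasure (E : Type*) [NormedAddCommGroup E] [InnerProductSpace ℝ E]
    [FiniteDimensional ℝ E] [MeasurableSpace E] [BorelSpace E] : Measure E :=
  volume.withDensity fun x => ENNReal.ofReal (1 / (π * (1 + ‖x‖ ^ 2) ^ 2))

lemma sphericalMeasure_le_volume : sphericalMeasure E ≤ volume := by
  refine (withDensity_mono (ae_of_all _ fun x => ?_)).trans_eq (withDensity_one (μ := volume))
  rw [Pi.one_apply, ENNReal.ofReal_le_one]
  exact div_le_one_of_le₀ (one_le_mul_of_one_le_of_one_le (by linarith [pi_gt_three])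
    (one_le_pow₀ (by linarith [sq_nonneg ‖x‖]))) (by positivity)

lemma integrable_sphericalMeasure_iff {f : E → ℝ} : Integrable f (sphericalMeasure E) ↔
    Integrable fun x => 1 / (π * (1 + ‖x‖ ^ 2) ^ 2) * f x := by
  rw [sphericalMeasure, integrable_withDensity_iff_integrable_smul' (by fun_prop) (by simp)]
  refine integrable_congr (ae_of_all _ fun x => ?_)
  simp only [ENNReal.toReal_ofReal (by positivity : 0 ≤ 1 / (π * (1 + ‖x‖ ^ 2) ^ 2)), smul_eq_mul]

lemma integral_sphericalMeasure (f : E → ℝ) : ∫ x, f x ∂sphericalMeasure E =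
    ∫ x, 1 / (π * (1 + ‖x‖ ^ 2) ^ 2) * f x := by
  rw [sphericalMeasure, integral_withDensity_eq_integral_toReal_smul (by fun_prop) (by simp)]
  refine integral_congr_ae (ae_of_all _ fun x => ?_)
  simp only [ENNReal.toReal_ofReal (by positivity : 0 ≤ 1 / (π * (1 + ‖x‖ ^ 2) ^ 2)), smul_eq_mul]

lemma volume_real_unitBall_of_finrank_eq_two (hE : finrank ℝ E = 2) :
    (volume : Measure E).real (Metric.ball 0 1) = π := by
  have : Nontrivial E := nontrivial_of_finrank_pos (R := ℝ) (by omega)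
  rw [Measure.real, InnerProductSpace.volume_ball, hE]
  simp [pi_pos.le, one_add_one_eq_two]

lemma integrable_comp_norm_sphericalMeasure_iff (hE : finrank ℝ E = 2) {g : ℝ → ℝ} :
    Integrable (fun x => g ‖x‖) (sphericalMeasure E) ↔
      IntegrableOn (fun r => 2 * r / (1 + r ^ 2) ^ 2 * g r) (Ioi 0) := by
  have : Nontrivial E := nontrivial_of_finrank_pos (R := ℝ) (by omega)
  rw [integrable_sphericalMeasure_iff, integrable_fun_norm_addHaar volume
    (f := fun r => 1 / (π * (1 + r ^ 2) ^ 2) * g r), hE, IntegrableOn, IntegrableOn,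
    ← integrable_const_mul_iff (IsUnit.mk0 (2 * π) (by positivity))]
  refine integrable_congr (ae_of_all _ fun r => ?_)
  simp only [smul_eq_mul]
  field_simp
  norm_num

lemma integral_comp_norm_sphericalMeasure (hE : finrank ℝ E = 2) (g : ℝ → ℝ) :
    ∫ x, g ‖x‖ ∂sphericalMeasure E = ∫ r in Ioi 0, 2 * r / (1 + r ^ 2) ^ 2 * g r := by
  have : Nontrivial E := nontrivial_of_finrank_pos (R := ℝ) (by omega)
  rw [integral_sphericalMeasure, integral_fun_norm_addHaar volume
    (fun r => 1 / (π * (1 + r ^ 2) ^ 2) * g r), volume_real_unitBall_of_finrank_eq_two hE, hE,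
    nsmul_eq_mul, smul_eq_mul, ← mul_assoc, ← integral_const_mul]
  refine integral_congr_ae (ae_of_all _ fun r => ?_)
  simp only [smul_eq_mul]
  field_simp
  norm_num
  ring

lemma hasDerivAt_one_add_sq (r : ℝ) : HasDerivAt (fun r : ℝ => 1 + r ^ 2) (2 * r) r := by
  simpa using (hasDerivAt_pow 2 r).const_add 1

lemma hasDerivAt_sq_div_one_add_sq (r : ℝ) :
    HasDerivAt (fun r : ℝ => r ^ 2 / (1 + r ^ 2)) (2 * r / (1 + r ^ 2) ^ 2) r := by
  have h := (hasDerivAt_pow 2 r).div (hasDerivAt_one_add_sq r) (by positivity)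
  refine h.congr_deriv ?_
  push_cast
  ring

lemma tendsto_one_add_sq_atTop : Tendsto (fun r : ℝ => 1 + r ^ 2) atTop atTop :=
  tendsto_atTop_add_const_left _ _ (tendsto_pow_atTop two_ne_zero)

lemma tendsto_sq_div_one_add_sq : Tendsto (fun r : ℝ => r ^ 2 / (1 + r ^ 2)) atTop (𝓝 1) := by
  have h := (tendsto_inv_atTop_zero.comp tendsto_one_add_sq_atTop).const_sub 1
  rw [sub_zero] at h
  refine h.congr fun r => ?_
  simp only [Function.comp]
  field_simp
  ring

lemma isProbabilityMeasure_sphericalMeasure (hE : finrank ℝ E = 2) :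
    IsProbabilityMeasure (sphericalMeasure E) := by
  have h := integral_comp_norm_sphericalMeasure hE fun _ => 1
  simp only [mul_one] at h
  rw [integral_const, smul_eq_mul, mul_one, integral_Ioi_of_hasDerivAt_of_nonneg'
    (fun r _ => hasDerivAt_sq_div_one_add_sq r) (fun r (hr : 0 < r) => by positivity)
    tendsto_sq_div_one_add_sq] at h
  exact ⟨by simpa [Measure.real, ENNReal.toReal_eq_one_iff] using h⟩

instance : IsProbabilityMeasure (sphericalMeasure ℂ) :=
  isProbabilityMeasure_sphericalMeasure Complex.finrank_real_complex

lemma hasDerivAt_neg_log_one_add_sq_add_one_div (r : ℝ) :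
    HasDerivAt (fun r : ℝ => -((log (1 + r ^ 2) + 1) / (1 + r ^ 2)))
      (2 * r / (1 + r ^ 2) ^ 2 * log (1 + r ^ 2)) r := by
  have hpos : 1 + r ^ 2 ≠ 0 := by positivity
  have h := ((((hasDerivAt_one_add_sq r).log hpos).add_const 1).div
    (hasDerivAt_one_add_sq r) hpos).neg
  refine h.congr_deriv ?_
  field_simp
  ring

lemma tendsto_neg_log_one_add_sq_add_one_div :
    Tendsto (fun r : ℝ => -((log (1 + r ^ 2) + 1) / (1 + r ^ 2))) atTop (𝓝 0) := by
  have h := ((isLittleO_log_id_atTop.tendsto_div_nhds_zero.add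
    tendsto_inv_atTop_zero).comp tendsto_one_add_sq_atTop).neg
  rw [add_zero, neg_zero] at h
  refine h.congr fun r => ?_
  simp only [Function.comp, add_div, one_div, id]

lemma integrable_log_one_add_norm_sq (hE : finrank ℝ E = 2) :
    Integrable (fun x => log (1 + ‖x‖ ^ 2)) (sphericalMeasure E) :=
  (integrable_comp_norm_sphericalMeasure_iff hE (g := fun r => log (1 + r ^ 2))).2 <|
    integrableOn_Ioi_deriv_of_nonneg'
      (fun r _ => hasDerivAt_neg_log_one_add_sq_add_one_div r)
      (fun r (hr : 0 < r) => mul_nonneg (by positivity) (log_nonneg (by linarith [sq_nonneg r])))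
      tendsto_neg_log_one_add_sq_add_one_div

lemma integral_log_one_add_norm_sq (hE : finrank ℝ E = 2) :
    ∫ x, log (1 + ‖x‖ ^ 2) ∂sphericalMeasure E = 1 := by
  rw [integral_comp_norm_sphericalMeasure hE fun r => log (1 + r ^ 2),
    integral_Ioi_of_hasDerivAt_of_nonneg'
      (fun r _ => hasDerivAt_neg_log_one_add_sq_add_one_div r)
      (fun r (hr : 0 < r) => mul_nonneg (by positivity) (log_nonneg (by linarith [sq_nonneg r])))
      tendsto_neg_log_one_add_sq_add_one_div]
  norm_num

end SphericalMeasure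

section RotationInvariance

variable {F : Type*} [NormedAddCommGroup F]

lemma map_linearIsometryEquiv_sphericalMeasure {E : Type*} [NormedAddCommGroup E]
    [InnerProductSpace ℝ E] [FiniteDimensional ℝ E] [MeasurableSpace E] [BorelSpace E]
    (e : E ≃ₗᵢ[ℝ] E) : (sphericalMeasure E).map e = sphericalMeasure E := by
  ext s hs
  rw [Measure.map_apply e.continuous.measurable hs, sphericalMeasure,
    withDensity_apply _ (e.continuous.measurable hs), withDensity_apply _ hs,
    ← e.measurePreserving.setLIntegral_comp_preimage hs (by fun_prop)]
  simp only [LinearIsometryEquiv.norm_map]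

/-- Invariance of a measure on the plane under all rotations about the origin. -/
def IsRotationInvariant (μ : Measure ℂ) : Prop :=
  ∀ θ : ℝ, μ.map (fun z => Complex.exp (θ * Complex.I) * z) = μ

lemma isRotationInvariant_sphericalMeasure : IsRotationInvariant (sphericalMeasure ℂ) := by
  intro θ
  rw [← Circle.coe_exp]
  exact map_linearIsometryEquiv_sphericalMeasure (rotation (Circle.exp θ))

lemma integrable_prod_rotate {μ : Measure ℂ} [SFinite μ] (hμ : IsRotationInvariant μ)
    {f : ℂ → F} (hf : Integrable f μ) :
    Integrable (fun p : ℝ × ℂ => f (Complex.exp (p.1 * Complex.I) * p.2))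
      ((volume.restrict (Set.Ioc 0 (2 * π))).prod μ) := by
  have hrot := (MeasurePreserving.id (volume.restrict (Set.Ioc 0 (2 * π)))).skew_product
    (g := fun (θ : ℝ) (z : ℂ) => Complex.exp (θ * Complex.I) * z)
    (by unfold Function.uncurry; fun_prop) (ae_of_all _ hμ)
  exact hrot.integrable_comp_of_integrable (hf.comp_snd _)

variable [NormedSpace ℝ F]

lemma circleAverage_norm_eq_integral_rotate (f : ℂ → F) (z : ℂ) :
    circleAverage f 0 ‖z‖ = (2 * π)⁻¹ •
      ∫ θ in Set.Ioc 0 (2 * π), f (Complex.exp (θ * Complex.I) * z) := by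
  rw [circleAverage_eq_integral_add z.arg, intervalIntegral.integral_of_le (by positivity)]
  have hrot (θ : ℝ) : circleMap 0 ‖z‖ (θ + z.arg) = Complex.exp (θ * Complex.I) * z := by
    nth_rw 3 [← Complex.norm_mul_exp_arg_mul_I z]
    simp only [circleMap, Complex.ofReal_add, add_mul, Complex.exp_add]
    ring
  simp only [hrot]

lemma integrable_circleAverage_norm {μ : Measure ℂ} [SFinite μ]
    (hμ : IsRotationInvariant μ) {f : ℂ → F} (hf : Integrable f μ) :
    Integrable (fun z => circleAverage f 0 ‖z‖) μ := by
  simp only [circleAverage_norm_eq_integral_rotate]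
  exact (integrable_prod_rotate hμ hf).integral_prod_right.smul _

lemma integral_circleAverage_norm [CompleteSpace F] {μ : Measure ℂ} [SFinite μ]
    (hμ : IsRotationInvariant μ) {f : ℂ → F} (hf : Integrable f μ) :
    ∫ z, circleAverage f 0 ‖z‖ ∂μ = ∫ z, f z ∂μ := by
  have hrot (θ : ℝ) : ∫ z, f (Complex.exp (θ * Complex.I) * z) ∂μ = ∫ z, f z ∂μ := by
    conv_rhs => rw [← hμ θ]
    rw [integral_map (by fun_prop) (by rw [hμ θ]; exact hf.aestronglyMeasurable)]
  simp only [circleAverage_norm_eq_integral_rotate]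
  rw [integral_smul, ← integral_integral_swap (integrable_prod_rotate hμ hf)]
  simp only [hrot]
  rw [setIntegral_const, smul_smul, Real.volume_real_Ioc_of_le (by positivity), sub_zero,
    inv_mul_cancel₀ (by positivity), one_smul]

end RotationInvariance

section LogarithmicPotential

open Set
open scoped Topology

lemma posLog_norm_le_log_one_add_norm_sq {E : Type*} [SeminormedAddCommGroup E] (x : E) :
    log⁺ ‖x‖ ≤ log (1 + ‖x‖ ^ 2) := by
  rw [← posLog_eq_log (by rw [abs_of_pos (by positivity)]; linarith [sq_nonneg ‖x‖])]
  exact posLog_le_posLog (norm_nonneg x) (by nlinarith [sq_nonneg (‖x‖ - 1)])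

lemma integrable_posLog_norm_sub (a : ℂ) :
    Integrable (fun z => log⁺ ‖z - a‖) (sphericalMeasure ℂ) := by
  refine ((integrable_const (log 2 + log⁺ ‖a‖)).add
    (integrable_log_one_add_norm_sq Complex.finrank_real_complex)).mono' (by fun_prop)
    (ae_of_all _ fun z => ?_)
  rw [Real.norm_of_nonneg posLog_nonneg]
  calc log⁺ ‖z - a‖ ≤ log 2 + log⁺ ‖z‖ + log⁺ ‖a‖ := by
        have h := posLog_norm_add_le z (-a)
        rw [← sub_eq_add_neg, norm_neg] at h
        linarith
    _ ≤ log 2 + log⁺ ‖a‖ + log (1 + ‖z‖ ^ 2) := by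
        linarith [posLog_norm_le_log_one_add_norm_sq z]

lemma integrableOn_mul_posLog_inv : IntegrableOn (fun r => r * log⁺ r⁻¹) (Ioi 0) := by
  have hbound : ∀ r ∈ Ioc (0 : ℝ) 1, ‖r * log⁺ r⁻¹‖ ≤ 1 := fun r hr => by
    have hinv : 1 ≤ r⁻¹ := (one_le_inv₀ hr.1).2 hr.2
    rw [Real.norm_of_nonneg (mul_nonneg hr.1.le posLog_nonneg),
      posLog_eq_log (hinv.trans (le_abs_self _)), ← le_inv_mul_iff₀ hr.1, mul_one]
    exact log_le_self (zero_le_one.trans hinv)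
  refine IntegrableOn.of_forall_sdiff_eq_zero (s := Ioc 0 1) ?_ measurableSet_Ioi fun r hr => ?_
  · exact Measure.integrableOn_of_bounded (by simp) (by fun_prop)
      ((ae_restrict_iff' measurableSet_Ioc).2 (ae_of_all _ hbound))
  · have hr1 : 1 < r := not_le.1 fun h => hr.2 ⟨hr.1, h⟩
    rw [(posLog_eq_zero_iff _).2, mul_zero]
    rw [abs_of_nonneg (inv_nonneg.2 (zero_le_one.trans hr1.le))]
    exact inv_le_one_of_one_le₀ hr1.le

lemma integrable_posLog_inv_norm : Integrable fun z : ℂ => log⁺ ‖z‖⁻¹ := by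
  rw [integrable_fun_norm_addHaar volume (f := fun r => log⁺ r⁻¹), Complex.finrank_real_complex]
  simpa only [Nat.add_one_sub_one, pow_one, smul_eq_mul] using integrableOn_mul_posLog_inv

lemma integrable_log_norm_sub (a : ℂ) :
    Integrable (fun z => log ‖z - a‖) (sphericalMeasure ℂ) := by
  simp_rw [← posLog_sub_posLog_inv (x := ‖_ - a‖)]
  exact (integrable_posLog_norm_sub a).sub
    ((integrable_posLog_inv_norm.comp_sub_right a).mono_measure sphericalMeasure_le_volume)

lemma circleAverage_log_norm_sub_eq_log_max (a : ℂ) {r : ℝ} (hr : 0 < r) :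
    circleAverage (fun z => log ‖z - a‖) 0 r = log (max r ‖a‖) := by
  rw [circleAverage_log_norm_sub_const_eq_log_radius_add_posLog hr.ne', zero_sub, norm_neg]
  rcases le_total ‖a‖ r with h | h
  · rw [max_eq_left h, (posLog_eq_zero_iff _).2, add_zero]
    rw [abs_of_nonneg (by positivity), inv_mul_le_one₀ hr]
    exact h
  · have ha : 0 < ‖a‖ := hr.trans_le h
    rw [max_eq_right h, posLog_eq_log, log_mul (by positivity) ha.ne', log_inv]
    · ring
    · rw [abs_of_nonneg (by positivity), one_le_inv_mul₀ hr]
      exact h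

/-- A primitive of the spherical radial density `2r/(1+r²)²` times `log r`, extended continuously
by `0` to `r = 0`. -/
noncomputable def logRadialPrimitive (r : ℝ) : ℝ :=
  r ^ 2 / (1 + r ^ 2) * log r - log (1 + r ^ 2) / 2

lemma hasDerivAt_logRadialPrimitive {r : ℝ} (hr : 0 < r) :
    HasDerivAt logRadialPrimitive (2 * r / (1 + r ^ 2) ^ 2 * log r) r := by
  have h := ((hasDerivAt_sq_div_one_add_sq r).mul (hasDerivAt_log hr.ne')).sub
    (((hasDerivAt_one_add_sq r).log (by positivity)).div_const 2)
  refine h.congr_deriv ?_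
  field_simp
  ring

lemma continuous_logRadialPrimitive : Continuous logRadialPrimitive := by
  have h : Continuous fun r : ℝ => r / (1 + r ^ 2) * (r * log r) - log (1 + r ^ 2) / 2 := by
    have hpos (r : ℝ) : 1 + r ^ 2 ≠ 0 := by positivity
    exact ((continuous_id.div (by fun_prop) hpos).mul continuous_mul_log).sub
      (((by fun_prop : Continuous fun r : ℝ => 1 + r ^ 2).log hpos).div_const 2)
  refine h.congr fun r => ?_
  rw [logRadialPrimitive]
  ring

lemma tendsto_logRadialPrimitive : Tendsto logRadialPrimitive atTop (𝓝 0) := by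
  have hlog : Tendsto (fun r : ℝ => log (r ^ 2 / (1 + r ^ 2)) / 2) atTop (𝓝 0) := by
    simpa using (tendsto_sq_div_one_add_sq.log one_ne_zero).div_const 2
  have h := hlog.sub ((isLittleO_log_id_atTop.tendsto_div_nhds_zero.mul tendsto_inv_atTop_zero).mul
    tendsto_sq_div_one_add_sq)
  simp only [zero_mul, sub_zero, id] at h
  refine h.congr' ?_
  filter_upwards [eventually_gt_atTop 0] with r hr
  rw [logRadialPrimitive, log_div (by positivity) (by positivity), log_pow]
  field_simp
  push_cast
  ring

lemma setIntegral_log_max_radial {s : ℝ} (hs : 0 ≤ s)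
    (hint : IntegrableOn (fun r => 2 * r / (1 + r ^ 2) ^ 2 * log (max r s)) (Ioi 0)) :
    ∫ r in Ioi 0, 2 * r / (1 + r ^ 2) ^ 2 * log (max r s) = log (1 + s ^ 2) / 2 := by
  have hinner : ∫ r in Ioc 0 s, 2 * r / (1 + r ^ 2) ^ 2 * log (max r s) =
      s ^ 2 / (1 + s ^ 2) * log s := by
    rw [setIntegral_congr_fun measurableSet_Ioc (g := fun r => 2 * r / (1 + r ^ 2) ^ 2 * log s)
      fun r hr => by simp only [max_eq_right hr.2], integral_mul_const,
      ← intervalIntegral.integral_of_le hs, intervalIntegral.integral_eq_sub_of_hasDerivAt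
        fun r _ => hasDerivAt_sq_div_one_add_sq r]
    · simp
    · refine (Continuous.div ?_ ?_ fun r => ?_).intervalIntegrable _ _
      · fun_prop
      · fun_prop
      · positivity
  have heq : EqOn (fun r => 2 * r / (1 + r ^ 2) ^ 2 * log (max r s))
      (fun r => 2 * r / (1 + r ^ 2) ^ 2 * log r) (Ioi s) := fun r hr => by
    simp only [max_eq_left (mem_Ioi.1 hr).le]
  have houter : ∫ r in Ioi s, 2 * r / (1 + r ^ 2) ^ 2 * log (max r s) =
      0 - logRadialPrimitive s := by
    rw [setIntegral_congr_fun measurableSet_Ioi heq]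
    exact integral_Ioi_of_hasDerivAt_of_tendsto continuous_logRadialPrimitive.continuousWithinAt
      (fun r hr => hasDerivAt_logRadialPrimitive (hs.trans_lt hr))
      ((hint.mono_set (Ioi_subset_Ioi hs)).congr_fun heq measurableSet_Ioi)
      tendsto_logRadialPrimitive
  rw [← Ioc_union_Ioi_eq_Ioi hs, setIntegral_union (Ioc_disjoint_Ioi le_rfl) measurableSet_Ioi
    (hint.mono_set Ioc_subset_Ioi_self) (hint.mono_set (Ioi_subset_Ioi hs)), hinner, houter,
    logRadialPrimitive]
  ring

lemma integral_log_norm_sub (a : ℂ) :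
    ∫ z, log ‖z - a‖ ∂sphericalMeasure ℂ = log (1 + ‖a‖ ^ 2) / 2 := by
  have hrot := isRotationInvariant_sphericalMeasure
  have hint := integrable_log_norm_sub a
  have hmax : ∀ r ∈ Ioi (0 : ℝ),
      2 * r / (1 + r ^ 2) ^ 2 * circleAverage (fun z => log ‖z - a‖) 0 r =
        2 * r / (1 + r ^ 2) ^ 2 * log (max r ‖a‖) := fun r hr => by
    rw [circleAverage_log_norm_sub_eq_log_max a hr]
  rw [← integral_circleAverage_norm hrot hint, integral_comp_norm_sphericalMeasure
    Complex.finrank_real_complex (circleAverage (fun z => log ‖z - a‖) 0),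
    setIntegral_congr_fun measurableSet_Ioi hmax]
  exact setIntegral_log_max_radial (norm_nonneg a) <|
    ((integrable_comp_norm_sphericalMeasure_iff Complex.finrank_real_complex).1
      (integrable_circleAverage_norm hrot hint)).congr_fun hmax measurableSet_Ioi

end LogarithmicPotential

section SphericalKernel

open ComplexConjugate

/-- The kernel `-2 log` of the chordal distance of the sphere, in stereographic coordinates. On the
diagonal the convention `log 0 = 0` gives the finite value `2 log (1 + ‖z‖²)`. -/
noncomputable def sphericalKernel {E : Type*} [SeminormedAddCommGroup E] (z w : E) : ℝ :=
  log (1 + ‖z‖ ^ 2) + log (1 + ‖w‖ ^ 2) - 2 * log ‖z - w‖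

lemma sphericalKernel_self {E : Type*} [SeminormedAddCommGroup E] (z : E) :
    sphericalKernel z z = 2 * log (1 + ‖z‖ ^ 2) := by
  rw [sphericalKernel, sub_self, norm_zero, log_zero]
  ring

lemma sphericalKernel_comm {E : Type*} [SeminormedAddCommGroup E] (z w : E) :
    sphericalKernel z w = sphericalKernel w z := by
  rw [sphericalKernel, sphericalKernel, norm_sub_rev, add_comm (log _)]

lemma ae_notMem_range {ι : Type*} [Countable ι] (x : ι → ℂ) :
    ∀ᵐ z ∂sphericalMeasure ℂ, z ∉ Set.range x :=
  sphericalMeasure_le_volume.absolutelyContinuous.ae_le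
    ((Set.countable_range x).ae_notMem volume)

lemma integrable_sphericalKernel (a : ℂ) :
    Integrable (sphericalKernel · a) (sphericalMeasure ℂ) :=
  ((integrable_log_one_add_norm_sq Complex.finrank_real_complex).add (integrable_const _)).sub
    ((integrable_log_norm_sub a).const_mul 2)

lemma integral_sphericalKernel (a : ℂ) :
    ∫ z, sphericalKernel z a ∂sphericalMeasure ℂ = 1 := by
  have hlog := integrable_log_one_add_norm_sq Complex.finrank_real_complex
  have hsum : Integrable (fun z => log (1 + ‖z‖ ^ 2) + log (1 + ‖a‖ ^ 2)) (sphericalMeasure ℂ) :=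
    hlog.add (integrable_const _)
  simp only [sphericalKernel]
  rw [integral_sub hsum ((integrable_log_norm_sub a).const_mul 2),
    integral_add hlog (integrable_const _), integral_const_mul, integral_log_norm_sub,
    integral_log_one_add_norm_sq Complex.finrank_real_complex]
  simp only [integral_const, probReal_univ, one_smul]
  ring

/-- In stereographic coordinates, the isometry of the sphere that sends the point `z` to the north
pole, i.e. to `∞`. -/
noncomputable def rotationToPole (z w : ℂ) : ℂ := (1 + conj z * w) / (w - z)

lemma rotationToPole_sub_rotationToPole {z w w' : ℂ} (hw : w ≠ z) (hw' : w' ≠ z) :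
    rotationToPole z w - rotationToPole z w' =
      (1 + conj z * z) * (w' - w) / ((w - z) * (w' - z)) := by
  have := sub_ne_zero.2 hw
  have := sub_ne_zero.2 hw'
  rw [rotationToPole, rotationToPole]
  field_simp
  ring

lemma norm_one_add_conj_mul_self (z : ℂ) : ‖1 + conj z * z‖ = 1 + ‖z‖ ^ 2 := by
  rw [mul_comm, Complex.mul_conj, Complex.normSq_eq_norm_sq, ← Complex.ofReal_one,
    ← Complex.ofReal_add, Complex.norm_of_nonneg (by positivity)]

lemma injOn_rotationToPole (z : ℂ) : Set.InjOn (rotationToPole z) {z}ᶜ := by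
  intro w hw w' hw' h
  have hz : 1 + conj z * z ≠ 0 := by
    rw [← norm_ne_zero_iff, norm_one_add_conj_mul_self]
    positivity
  have hsub := rotationToPole_sub_rotationToPole hw hw'
  rw [h, sub_self, eq_comm, div_eq_zero_iff, mul_eq_zero, mul_eq_zero, sub_eq_zero, sub_eq_zero,
    sub_eq_zero] at hsub
  simp_all

lemma one_add_norm_rotationToPole_sq {z w : ℂ} (hw : w ≠ z) :
    1 + ‖rotationToPole z w‖ ^ 2 = (1 + ‖w‖ ^ 2) * (1 + ‖z‖ ^ 2) / ‖w - z‖ ^ 2 := by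
  have hne : ‖w - z‖ ≠ 0 := norm_ne_zero_iff.2 (sub_ne_zero.2 hw)
  rw [rotationToPole, norm_div, div_pow, eq_div_iff (by positivity), add_mul,
    div_mul_cancel₀ _ (by positivity)]
  simp only [← Complex.normSq_eq_norm_sq, Complex.normSq_apply, Complex.add_re, Complex.add_im,
    Complex.sub_re, Complex.sub_im, Complex.mul_re, Complex.mul_im, Complex.conj_re,
    Complex.conj_im, Complex.one_re, Complex.one_im]
  ring

lemma log_one_add_norm_rotationToPole_sq {z w : ℂ} (hw : w ≠ z) :
    log (1 + ‖rotationToPole z w‖ ^ 2) = sphericalKernel z w := by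
  have hne : ‖w - z‖ ≠ 0 := norm_ne_zero_iff.2 (sub_ne_zero.2 hw)
  rw [one_add_norm_rotationToPole_sq hw, log_div (by positivity) (by positivity),
    log_mul (by positivity) (by positivity), log_pow, sphericalKernel_comm, sphericalKernel]
  push_cast
  ring

lemma sphericalKernel_rotationToPole {z w w' : ℂ} (hw : w ≠ z) (hw' : w' ≠ z) (h : w ≠ w') :
    sphericalKernel (rotationToPole z w) (rotationToPole z w') = sphericalKernel w w' := by
  have hne : ‖w - z‖ ≠ 0 := norm_ne_zero_iff.2 (sub_ne_zero.2 hw)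
  have hne' : ‖w' - z‖ ≠ 0 := norm_ne_zero_iff.2 (sub_ne_zero.2 hw')
  have hdist : ‖w - w'‖ ≠ 0 := norm_ne_zero_iff.2 (sub_ne_zero.2 h)
  have hlog : log ‖rotationToPole z w - rotationToPole z w'‖ =
      log (1 + ‖z‖ ^ 2) + log ‖w - w'‖ - (log ‖w - z‖ + log ‖w' - z‖) := by
    rw [rotationToPole_sub_rotationToPole hw hw', norm_div, norm_mul, norm_mul,
      norm_one_add_conj_mul_self, norm_sub_rev w' w, log_div (by positivity) (by positivity),
      log_mul (by positivity) hdist, log_mul hne hne']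
  rw [sphericalKernel, log_one_add_norm_rotationToPole_sq hw,
    log_one_add_norm_rotationToPole_sq hw', hlog]
  simp only [sphericalKernel, norm_sub_rev z]
  ring

end SphericalKernel

section WeightedEnergy

variable {ι E : Type*} [Fintype ι] [NormedAddCommGroup E]

/-- The total log-moment `∑ log (1 + ‖x i‖²)` of a configuration. -/
noncomputable def logMoment (x : ι → E) : ℝ := ∑ i, log (1 + ‖x i‖ ^ 2)

/-- The Hamiltonian `w_n` at a configuration of distinct points. The diagonal terms of the double
sum vanish because `log 0 = 0`. -/
noncomputable def weightedEnergy (x : ι → E) : ℝ :=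
  -∑ i, ∑ j, log ‖x i - x j‖ + Fintype.card ι * logMoment x

/-- Minimality of the weighted energy among configurations of distinct points. -/
def IsEnergyMinimizer (x : ι → E) : Prop :=
  Function.Injective x ∧ ∀ y : ι → E, Function.Injective y → weightedEnergy x ≤ weightedEnergy y

lemma sum_sum_sphericalKernel (x : ι → E) :
    ∑ i, ∑ j, sphericalKernel (x i) (x j) = 2 * weightedEnergy x := by
  simp only [sphericalKernel, Finset.sum_sub_distrib, Finset.sum_add_distrib, Finset.sum_const,
    Finset.card_univ, nsmul_eq_mul, ← Finset.mul_sum, weightedEnergy, logMoment]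
  ring

lemma weightedEnergy_rotationToPole {x : ι → ℂ} (hx : Function.Injective x) {z : ℂ}
    (hz : z ∉ Set.range x) :
    weightedEnergy (fun i => rotationToPole z (x i)) =
      weightedEnergy x + (∑ i, sphericalKernel z (x i) - logMoment x) := by
  have hne (i : ι) : x i ≠ z := fun h => hz ⟨i, h⟩
  have hkernel (i j : ι) :
      sphericalKernel (rotationToPole z (x i)) (rotationToPole z (x j)) =
        sphericalKernel (x i) (x j) +
          if i = j then 2 * (sphericalKernel z (x i) - log (1 + ‖x i‖ ^ 2)) else 0 := by
    split_ifs with h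
    · rw [← h, sphericalKernel_self, sphericalKernel_self,
        log_one_add_norm_rotationToPole_sq (hne i)]
      ring
    · rw [sphericalKernel_rotationToPole (hne i) (hne j) (hx.ne h), add_zero]
  have hsum := sum_sum_sphericalKernel fun i => rotationToPole z (x i)
  simp only [hkernel, Finset.sum_add_distrib, sum_sum_sphericalKernel, Finset.sum_ite_eq,
    Finset.mem_univ, if_true, ← Finset.mul_sum, Finset.sum_sub_distrib] at hsum
  rw [logMoment]
  linarith

lemma logMoment_le_card {x : ι → ℂ} (hx : IsEnergyMinimizer x) :
    logMoment x ≤ Fintype.card ι := by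
  have hle : ∀ᵐ z ∂sphericalMeasure ℂ, logMoment x ≤ ∑ i, sphericalKernel z (x i) := by
    filter_upwards [ae_notMem_range x] with z hz
    have hinj : Function.Injective fun i => rotationToPole z (x i) := fun i j h =>
      hx.1 (injOn_rotationToPole z (fun h => hz ⟨i, h⟩) (fun h => hz ⟨j, h⟩) h)
    linarith [hx.2 _ hinj, weightedEnergy_rotationToPole hx.1 hz]
  have hint := integral_mono_ae (integrable_const _)
    (integrable_finsetSum _ fun i _ => integrable_sphericalKernel (x i)) hle
  rw [integral_finsetSum _ fun i _ => integrable_sphericalKernel (x i)] at hint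
  simpa [integral_sphericalKernel] using hint

lemma update_injective_of_notMem_range {α β : Type*} [DecidableEq α] {f : α → β}
    (hf : Function.Injective f) {b : β} (hb : b ∉ Set.range f) (a : α) :
    Function.Injective (Function.update f a b) := by
  intro c d h
  by_cases hc : c = a <;> by_cases hd : d = a <;>
    simp only [Function.update_apply, hc, hd, if_true, if_false] at h ⊢
  · exact (hb ⟨d, h.symm⟩).elim
  · exact (hb ⟨c, h⟩).elim
  · exact hf h

lemma sum_sum_eq_add_two_mul_sum_compl_add [DecidableEq ι] {f : ι → ι → ℝ}
    (hf : ∀ i j, f i j = f j i) (i : ι) :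
    ∑ j, ∑ k, f j k =
      f i i + 2 * ∑ j ∈ {i}ᶜ, f i j + ∑ j ∈ {i}ᶜ, ∑ k ∈ {i}ᶜ, f j k := by
  simp only [Fintype.sum_eq_add_sum_compl i, Finset.sum_add_distrib, fun k => hf k i]
  ring

lemma weightedEnergy_update [DecidableEq ι] (x : ι → E) (i : ι) (z : E) :
    weightedEnergy (Function.update x i z) - weightedEnergy x =
      (log (1 + ‖z‖ ^ 2) + ∑ j ∈ {i}ᶜ, sphericalKernel z (x j)) -
        (log (1 + ‖x i‖ ^ 2) + ∑ j ∈ {i}ᶜ, sphericalKernel (x i) (x j)) := by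
  have hsplit (y : ι → E) := (sum_sum_sphericalKernel y).symm.trans <|
    sum_sum_eq_add_two_mul_sum_compl_add (fun j k => sphericalKernel_comm (y j) (y k)) i
  have hupdate : ∀ j ∈ ({i}ᶜ : Finset ι), Function.update x i z j = x j := fun j hj =>
    Function.update_of_ne (by simpa using hj) z x
  have hx := hsplit x
  have hz := hsplit (Function.update x i z)
  rw [Finset.sum_congr rfl fun j hj => by rw [hupdate j hj],
    Finset.sum_congr rfl fun j hj => Finset.sum_congr rfl fun k hk => by
      rw [hupdate j hj, hupdate k hk], sphericalKernel_self, Function.update_self] at hz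
  rw [sphericalKernel_self] at hx
  linarith

lemma log_add_sum_sphericalKernel_le_card [DecidableEq ι] {x : ι → ℂ} (hx : IsEnergyMinimizer x)
    (i : ι) :
    log (1 + ‖x i‖ ^ 2) + ∑ j ∈ {i}ᶜ, sphericalKernel (x i) (x j) ≤ Fintype.card ι := by
  have hlog := integrable_log_one_add_norm_sq Complex.finrank_real_complex
  have hsum : Integrable (fun z => ∑ j ∈ {i}ᶜ, sphericalKernel z (x j)) (sphericalMeasure ℂ) :=
    integrable_finsetSum _ fun j _ => integrable_sphericalKernel (x j)
  have hle : ∀ᵐ z ∂sphericalMeasure ℂ,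
      log (1 + ‖x i‖ ^ 2) + ∑ j ∈ {i}ᶜ, sphericalKernel (x i) (x j) ≤
        log (1 + ‖z‖ ^ 2) + ∑ j ∈ {i}ᶜ, sphericalKernel z (x j) := by
    filter_upwards [ae_notMem_range x] with z hz
    have hinj : Function.Injective (Function.update x i z) :=
      update_injective_of_notMem_range hx.1 hz i
    linarith [hx.2 _ hinj, weightedEnergy_update x i z]
  have hint := integral_mono_ae (integrable_const _) (hlog.add hsum) hle
  have hcard : ((({i}ᶜ : Finset ι).card : ℝ)) = Fintype.card ι - 1 := by
    rw [Finset.card_compl, Finset.card_singleton, Nat.cast_sub (Fintype.card_pos_iff.2 ⟨i⟩),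
      Nat.cast_one]
  rw [integral_add' hlog hsum, integral_finsetSum _ fun j _ => integrable_sphericalKernel (x j),
    integral_log_one_add_norm_sq Complex.finrank_real_complex] at hint
  simpa [integral_sphericalKernel, hcard] using hint

lemma two_mul_weightedEnergy_le {x : ι → ℂ} (hx : IsEnergyMinimizer x) :
    2 * weightedEnergy x ≤ (Fintype.card ι : ℝ) ^ 2 + logMoment x := by
  have hsum : ∑ i, (log (1 + ‖x i‖ ^ 2) + ∑ j ∈ {i}ᶜ, sphericalKernel (x i) (x j)) ≤
      (Fintype.card ι : ℝ) ^ 2 := by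
    rw [sq, ← nsmul_eq_mul, ← Finset.card_univ (α := ι)]
    exact Finset.sum_le_card_nsmul _ _ _ fun i _ => log_add_sum_sphericalKernel_le_card hx i
  have hsplit (i : ι) : ∑ j ∈ {i}ᶜ, sphericalKernel (x i) (x j) =
      ∑ j, sphericalKernel (x i) (x j) - 2 * log (1 + ‖x i‖ ^ 2) := by
    rw [Fintype.sum_eq_add_sum_compl i, sphericalKernel_self, add_sub_cancel_left]
  simp only [hsplit, Finset.sum_add_distrib, Finset.sum_sub_distrib, ← Finset.mul_sum,
    sum_sum_sphericalKernel] at hsum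
  rw [logMoment]
  linarith

end WeightedEnergy

section Hadamard

variable {𝕜 ι : Type*} [RCLike 𝕜] [Fintype ι] [LinearOrder ι] [LocallyFiniteOrderBot ι]

lemma norm_det_orthonormalBasis_le_prod_norm {E : Type*} [NormedAddCommGroup E]
    [InnerProductSpace 𝕜 E] (e : OrthonormalBasis ι 𝕜 E) (v : ι → E) :
    ‖e.toBasis.det v‖ ≤ ∏ i, ‖v i‖ := by
  have : FiniteDimensional 𝕜 E := e.toBasis.finiteDimensional_of_finite
  have hdim := Module.finrank_eq_card_basis e.toBasis
  let b := InnerProductSpace.gramSchmidtOrthonormalBasis hdim v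
  rw [e.toBasis.det.eq_smul_basis_det b.toBasis, AlternatingMap.smul_apply, smul_eq_mul, norm_mul,
    b.coe_toBasis, e.det_to_matrix_orthonormalBasis b, one_mul,
    InnerProductSpace.gramSchmidtOrthonormalBasis_det, norm_prod]
  refine Finset.prod_le_prod (fun _ _ => norm_nonneg _) fun i _ => ?_
  simpa [b.orthonormal.1 i] using norm_inner_le_norm (𝕜 := 𝕜) (b i) (v i)

lemma norm_det_sq_le_prod_sum_norm_sq (A : Matrix ι ι 𝕜) :
    ‖A.det‖ ^ 2 ≤ ∏ i, ∑ j, ‖A i j‖ ^ 2 := by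
  have h := norm_det_orthonormalBasis_le_prod_norm (EuclideanSpace.basisFun ι 𝕜)
    fun i => WithLp.toLp 2 (A i)
  have hdet : (EuclideanSpace.basisFun ι 𝕜).toBasis.det (fun i => WithLp.toLp 2 (A i)) = A.det := by
    rw [Module.Basis.det_apply, ← A.det_transpose]
    congr 1
  rw [hdet] at h
  calc ‖A.det‖ ^ 2 ≤ (∏ i, ‖WithLp.toLp 2 (A i)‖) ^ 2 := by gcongr
    _ = ∏ i, ∑ j, ‖A i j‖ ^ 2 := by
      simp only [← Finset.prod_pow, EuclideanSpace.norm_sq_eq]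

lemma prod_mul_norm_det_vandermonde_sq_le {n : ℕ} {w : Fin n → ℝ} (hw : ∀ k, 0 ≤ w k)
    (x : Fin n → 𝕜) :
    (∏ k, w k) * ‖(Matrix.vandermonde x).det‖ ^ 2 ≤ ∏ i, ∑ k, w k * (‖x i‖ ^ 2) ^ (k : ℕ) := by
  have h := norm_det_sq_le_prod_sum_norm_sq
    (Matrix.of fun i k => ((√(w k) : ℝ) : 𝕜) * Matrix.vandermonde x i k)
  rw [Matrix.det_mul_row, norm_mul, norm_prod, mul_pow, ← Finset.prod_pow] at h
  simpa only [Matrix.of_apply, Matrix.vandermonde_apply, norm_mul, norm_pow, mul_pow,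
    RCLike.norm_ofReal, sq_abs, sq_sqrt (hw _), pow_right_comm] using h

lemma sum_sum_log_norm_sub_eq {n : ℕ} {x : Fin n → 𝕜} (hx : Function.Injective x) :
    ∑ i, ∑ j, log ‖x i - x j‖ = 2 * log ‖(Matrix.vandermonde x).det‖ := by
  have hne (i j : Fin n) (hj : j ∈ Finset.Ioi i) : ‖x j - x i‖ ≠ 0 :=
    norm_ne_zero_iff.2 (sub_ne_zero.2 (hx.ne (Finset.mem_Ioi.1 hj).ne'))
  have hdiag : ∑ i, ∑ j, log ‖x i - x j‖ = ∑ i, ∑ j ∈ {i}ᶜ, log ‖x i - x j‖ := by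
    refine Finset.sum_congr rfl fun i _ => ?_
    rw [Fintype.sum_eq_add_sum_compl i, sub_self, norm_zero, log_zero, zero_add]
  have hoff := Finset.sum_sum_Ioi_add_eq_sum_sum_off_diag fun j i => log ‖x i - x j‖
  simp only [norm_sub_rev (x _) (x _), ← two_mul, ← Finset.mul_sum] at hoff
  simp only [Matrix.det_vandermonde, norm_prod]
  rw [hdiag, ← hoff, log_prod fun i _ => Finset.prod_ne_zero_iff.2 (hne i)]
  rw [Finset.sum_congr rfl fun i _ => log_prod (hne i)]
  simp only [norm_sub_rev (x _) (x _)]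

lemma sum_log_choose_add_sum_sum_log_norm_sub_le {n M : ℕ} (hnM : n ≤ M + 1) {x : Fin n → 𝕜}
    (hx : Function.Injective x) :
    ∑ k ∈ Finset.range n, log (M.choose k) + ∑ i, ∑ j, log ‖x i - x j‖ ≤ M * logMoment x := by
  have hbinom (i : Fin n) :
      ∑ k : Fin n, (M.choose k : ℝ) * (‖x i‖ ^ 2) ^ (k : ℕ) ≤ (1 + ‖x i‖ ^ 2) ^ M := by
    rw [Fin.sum_univ_eq_sum_range fun k => (M.choose k : ℝ) * (‖x i‖ ^ 2) ^ k, add_comm, add_pow]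
    simp only [one_pow, mul_one, mul_comm]
    exact Finset.sum_le_sum_of_subset_of_nonneg (Finset.range_mono hnM) fun _ _ _ => by positivity
  have hchoose (k : Fin n) : (M.choose k : ℝ) ≠ 0 :=
    Nat.cast_ne_zero.2 (Nat.choose_pos (by omega)).ne'
  have hdet : ‖(Matrix.vandermonde x).det‖ ≠ 0 :=
    norm_ne_zero_iff.2 (Matrix.det_vandermonde_ne_zero_iff.2 hx)
  have hprod : ∏ k : Fin n, (M.choose k : ℝ) ≠ 0 := Finset.prod_ne_zero_iff.2 fun k _ => hchoose k
  have hle := (prod_mul_norm_det_vandermonde_sq_le (fun k => (M.choose k).cast_nonneg) x).trans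
    (Finset.prod_le_prod (fun i _ => by positivity) fun i _ => hbinom i)
  have hlog := log_le_log (by positivity) hle
  rw [log_mul hprod (by positivity), log_pow, log_prod fun k _ => hchoose k,
    log_prod fun i _ => by positivity] at hlog
  simp only [log_pow, ← Finset.mul_sum] at hlog
  rw [sum_sum_log_norm_sub_eq hx, logMoment, ← Fin.sum_univ_eq_sum_range fun k => log (M.choose k)]
  exact_mod_cast hlog

end Hadamard

section BinomialProduct

lemma prod_range_choose_mul_pow (M n : ℕ) :
    (∏ k ∈ Finset.range n, M.choose k) * (M + 1) ^ n =
      (∏ k ∈ Finset.range (n + 1), (M + 1).choose k) * n.factorial := by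
  have hpascal : (∏ k ∈ Finset.range n, M.choose k) * (M + 1) ^ n =
      (∏ k ∈ Finset.range n, (M + 1).choose k) * (M + 1).descFactorial n := by
    rw [Nat.descFactorial_eq_prod_range, ← Finset.prod_mul_distrib]
    simpa only [Finset.card_range, Nat.choose_mul_succ_eq] using
      Finset.prod_mul_pow_card (s := Finset.range n) (f := M.choose) (b := M + 1)
  rw [hpascal, Nat.descFactorial_eq_factorial_mul_choose, Finset.prod_range_succ]
  ring

lemma sum_range_log_choose_succ {M n : ℕ} (hn : n ≤ M + 1) :
    ∑ k ∈ Finset.range (n + 1), log ((M + 1).choose k) =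
      ∑ k ∈ Finset.range n, log (M.choose k) + n * log (M + 1) - log n.factorial := by
  have hchoose {N m : ℕ} (hm : m ≤ N + 1) : ∀ k ∈ Finset.range m, (N.choose k : ℝ) ≠ 0 :=
    fun k hk => Nat.cast_ne_zero.2
      (Nat.choose_pos (Nat.lt_succ_iff.1 ((Finset.mem_range.1 hk).trans_le hm))).ne'
  have hlow := hchoose hn
  have hhigh := hchoose (Nat.succ_le_succ hn)
  have hprod := congrArg (fun m : ℕ => log m) (prod_range_choose_mul_pow M n)
  push_cast at hprod
  rw [log_mul (Finset.prod_ne_zero_iff.2 hlow) (by positivity),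
    log_mul (Finset.prod_ne_zero_iff.2 hhigh) (by positivity), log_prod hlow, log_prod hhigh,
    log_pow] at hprod
  linarith

lemma div_add_le_log_add_sub_log {s t : ℝ} (ht : 0 < t) (hs : 0 ≤ s) :
    s / (t + s) ≤ log (t + s) - log t := by
  rw [← log_div (by positivity) ht.ne']
  calc s / (t + s) = 1 - ((t + s) / t)⁻¹ := by field_simp; ring
    _ ≤ log ((t + s) / t) := one_sub_inv_le_log_of_pos (by positivity)

lemma log_factorial_le (n : ℕ) : log n.factorial ≤ (n + 1) * log n - n + 1 := by
  induction n with
  | zero => simp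
  | succ n ih =>
    rcases n.eq_zero_or_pos with rfl | hn
    · simp
    have hlog := div_add_le_log_add_sub_log (Nat.cast_pos.2 hn) zero_le_one
    rw [div_le_iff₀' (by positivity)] at hlog
    rw [Nat.factorial_succ, Nat.cast_mul, log_mul (by positivity) (by positivity)]
    push_cast
    linarith

lemma le_sum_range_log_choose (n p : ℕ) :
    (n : ℝ) * (n - 1) / 2 + (n - 1) * p - ((p + 1) ^ 2 + n) * log n ≤
      ∑ k ∈ Finset.range n, log ((n + p).choose k) := by
  induction n with
  | zero => simp
  | succ n ih =>
    rcases n.eq_zero_or_pos with rfl | hn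
    · simp
    have hn' : (0 : ℝ) < n := Nat.cast_pos.2 hn
    have hmono : (n + 1) * log n ≤ (n + 1) * log (n + 1) := by gcongr; linarith
    have hsq : (p + 1) ^ 2 / (n + (p + 1)) ≤ (p + 1) ^ 2 * (log (n + 1) - log n) := by
      refine le_trans ?_ (mul_le_mul_of_nonneg_left (div_add_le_log_add_sub_log hn' zero_le_one)
        (by positivity))
      rw [mul_one_div]
      gcongr
      linarith
    have hincrement : p + 1 - (p + 1) ^ 2 / (n + (p + 1)) ≤
        n * (log (n + (p + 1)) - log n) := by
      refine le_trans (le_of_eq ?_) (mul_le_mul_of_nonneg_left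
        (div_add_le_log_add_sub_log (s := p + 1) hn' (by positivity)) hn'.le)
      field_simp
      ring
    rw [add_right_comm, sum_range_log_choose_succ (by omega)]
    push_cast
    rw [add_assoc (n : ℝ) p]
    linarith [log_factorial_le n]

end BinomialProduct

section Asymptotics

lemma le_mul_logMoment_of_isEnergyMinimizer {n : ℕ} {x : Fin n → ℂ} (hx : IsEnergyMinimizer x)
    (p : ℕ) :
    2 * ((n - 1) * p - ((p + 1) ^ 2 + n) * log n) - n ≤ (2 * p + 1) * logMoment x := by
  have hlower := sum_log_choose_add_sum_sum_log_norm_sub_le (M := n + p) (by omega) hx.1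
  have hupper := two_mul_weightedEnergy_le hx
  rw [weightedEnergy, Fintype.card_fin] at hupper
  push_cast at hlower
  linarith [le_sum_range_log_choose n p]

lemma one_sub_le_logMoment_div {n : ℕ} (hn : 0 < n) {x : Fin n → ℂ} (hx : IsEnergyMinimizer x) :
    1 - (4 + 10 * log n) / √n ≤ logMoment x / n := by
  have hn' : (1 : ℝ) ≤ n := Nat.one_le_cast.2 hn
  have hsqrt_pos : (1 : ℝ) ≤ n.sqrt := Nat.one_le_cast.2 (Nat.sqrt_pos.2 hn)
  have hsqrt_sq : (n.sqrt : ℝ) ^ 2 ≤ n := by exact_mod_cast n.sqrt_le'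
  have hcoeff : ((n.sqrt + 1) ^ 2 + n) * log n ≤ 5 * n * log n := by
    gcongr
    nlinarith
  have hdefect : (2 * n.sqrt + 1) * (n - logMoment x) ≤ (4 + 10 * log n) * n := by
    nlinarith [le_mul_logMoment_of_isEnergyMinimizer hx n.sqrt]
  have hcard : 0 ≤ n - logMoment x := by simpa using logMoment_le_card hx
  rw [sub_le_comm, one_sub_div (by positivity), div_le_div_iff₀ (by positivity) (by positivity)]
  calc (n - logMoment x) * √n ≤ (n - logMoment x) * (2 * n.sqrt + 1) := by
        gcongr
        linarith [real_sqrt_le_nat_sqrt_succ (a := n)]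
    _ ≤ (4 + 10 * log n) * n := by rwa [mul_comm]

lemma tendsto_one_sub_add_mul_log_div_sqrt (a b : ℝ) :
    Tendsto (fun n : ℕ => 1 - (a + b * log n) / √n) atTop (nhds 1) := by
  have hsqrt : Tendsto (fun t : ℝ => a / √t) atTop (nhds 0) :=
    tendsto_const_nhds.div_atTop tendsto_sqrt_atTop
  have hlog : Tendsto (fun t : ℝ => log t / √t) atTop (nhds 0) := by
    simpa only [sqrt_eq_rpow] using
      (isLittleO_log_rpow_atTop (r := 1 / 2) (by norm_num)).tendsto_div_nhds_zero
  have hlim := ((hsqrt.add (hlog.const_mul b)).const_sub 1).comp tendsto_natCast_atTop_atTop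
  simpa [Function.comp_def, add_div, mul_div_assoc] using hlim

lemma tendsto_logMoment_div {x : (n : ℕ) → Fin n → ℂ}
    (hx : ∀ᶠ n in atTop, IsEnergyMinimizer (x n)) :
    Tendsto (fun n => logMoment (x n) / n) atTop (nhds 1) := by
  refine tendsto_of_tendsto_of_tendsto_of_le_of_le'
    (tendsto_one_sub_add_mul_log_div_sqrt 4 10) tendsto_const_nhds ?_ ?_
  · filter_upwards [hx, eventually_gt_atTop 0] with n hmin hn
    exact one_sub_le_logMoment_div hn hmin
  · filter_upwards [hx] with n hmin
    exact div_le_one_of_le₀ (by simpa using logMoment_le_card hmin) n.cast_nonneg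

end Asymptotics

section Transfer

variable {ι E F : Type*} [Fintype ι] [NormedAddCommGroup E] [NormedAddCommGroup F]
  [NormedSpace ℝ E] [NormedSpace ℝ F]

lemma logMoment_comp_linearIsometryEquiv (e : E ≃ₗᵢ[ℝ] F) (x : ι → E) :
    logMoment (e ∘ x) = logMoment x := by
  simp only [logMoment, Function.comp_apply, e.norm_map]

lemma weightedEnergy_comp_linearIsometryEquiv (e : E ≃ₗᵢ[ℝ] F) (x : ι → E) :
    weightedEnergy (e ∘ x) = weightedEnergy x := by
  simp only [weightedEnergy, logMoment_comp_linearIsometryEquiv, Function.comp_apply, ← map_sub,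
    e.norm_map]

lemma IsEnergyMinimizer.comp_linearIsometryEquiv {x : ι → E} (hx : IsEnergyMinimizer x)
    (e : E ≃ₗᵢ[ℝ] F) : IsEnergyMinimizer (e ∘ x) := by
  refine ⟨e.injective.comp hx.1, fun y hy => ?_⟩
  rw [weightedEnergy_comp_linearIsometryEquiv, ← weightedEnergy_comp_linearIsometryEquiv e.symm y]
  exact hx.2 _ (e.symm.injective.comp hy)

lemma wHamE_eq_coe_weightedEnergy {n : ℕ} {x : Fin n → EuclideanSpace ℝ (Fin 2)}
    (hx : Function.Injective x) : wHamE n x = weightedEnergy x := by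
  have hdiag (i j : Fin n) : (if i ≠ j then log (dist (x i) (x j)) else 0) = log ‖x i - x j‖ := by
    split_ifs with h
    · rw [dist_eq_norm]
    · rw [not_not.1 h, sub_self, norm_zero, log_zero]
  simp only [wHamE, if_pos hx, hdiag, weightedEnergy, logMoment, Fintype.card_fin]

lemma isEnergyMinimizer_of_forall_wHamE_le {n : ℕ} {x : Fin n → EuclideanSpace ℝ (Fin 2)}
    (hx : ∀ z, wHamE n x ≤ wHamE n z) : IsEnergyMinimizer x := by
  have hinj : Function.Injective x := by
    by_contra hne
    have hle := hx (Infinite.natEmbedding _ ∘ Fin.val)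
    rw [wHamE_eq_coe_weightedEnergy
      ((Infinite.natEmbedding _).injective.comp Fin.val_injective), wHamE, if_neg hne] at hle
    exact EReal.coe_ne_top _ (top_le_iff.1 hle)
  refine ⟨hinj, fun y hy => ?_⟩
  have hle := hx y
  rwa [wHamE_eq_coe_weightedEnergy hinj, wHamE_eq_coe_weightedEnergy hy,
    EReal.coe_le_coe_iff] at hle

end Transfer

/-- If for every `n ≥ 2` the tuple `(x₁ⁿ,…,xₙⁿ)` minimizes `w_n`, then
`(1/n) ∑ᵢ log(1+|xᵢⁿ|²) → ∫ log(1+|x|²) dμ_V = 1`. -/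
theorem limit_log_moment_of_minimizers
    (x : (n : ℕ) → Fin n → EuclideanSpace ℝ (Fin 2))
    (hmin : ∀ n, 2 ≤ n → ∀ z : Fin n → EuclideanSpace ℝ (Fin 2),
      wHamE n (x n) ≤ wHamE n z) :
    Tendsto (fun n : ℕ => (1 / (n : ℝ)) * ∑ i : Fin n, Real.log (1 + ‖x n i‖^2)) atTop
      (nhds (∫ a, Real.log (1 + ‖a‖^2) ∂muV)) ∧
    ∫ a, Real.log (1 + ‖a‖^2) ∂muV = 1 := by
  have hintegral : ∫ a, log (1 + ‖a‖ ^ 2) ∂muV = 1 :=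
    integral_log_one_add_norm_sq finrank_euclideanSpace_fin
  refine ⟨?_, hintegral⟩
  let e := Complex.orthonormalBasisOneI.repr.symm
  have hminimizer : ∀ᶠ n in atTop, IsEnergyMinimizer (e ∘ x n) := by
    filter_upwards [eventually_ge_atTop 2] with n hn
    exact (isEnergyMinimizer_of_forall_wHamE_le (hmin n hn)).comp_linearIsometryEquiv e
  rw [hintegral]
  have hlim := tendsto_logMoment_div hminimizer
  simp only [logMoment_comp_linearIsometryEquiv] at hlim
  simpa only [logMoment, one_div_mul_eq_div] using hlim
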